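/- Let A be a nonempty finite set and α > 0. Define the softmax map σ_α : ℝ^A → Δ(A) by σ_α(q)(a) = exp(q(a)/α) / ∑_{b∈A} exp(q(b)/α). Then σ_α is (1/α)-Lipschitz from the sup norm to the ℓ¹ norm: for all q₁, q₂ ∈ ℝ^A, ‖σ_α(q₁) − σ_α(q₂)‖₁ ≤ (1/α)·‖q₁ − q₂‖_∞. -/

import Mathlib

open scoped BigOperators

/-!
The ℓ¹ distance of two probability vectors `p` and `q` is twice the excess of `p` over `q` on the
event `S` where `p` exceeds `q`, so everything reduces to the two numbers `p(S)` and `q(S)`. For two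
Gibbs weights the odds ratio of any event is at most the exponential of the oscillation of the
difference of the exponents, hence at most `exp (2 D)` with `D = ‖q₁ - q₂‖_∞ / α`. Two probabilities
with odds ratio at most `r ^ 2` differ by at most `(r - 1) / (r + 1)`, and at `r = exp D` twice this
quantity is at most `log r = D`.
-/

lemma two_mul_sub_one_div_add_one_le_log {r : ℝ} (hr : 1 ≤ r) :
    2 * ((r - 1) / (r + 1)) ≤ Real.log r := by
  convert Real.le_log_one_add_of_nonneg (sub_nonneg.2 hr) using 1 <;> ring_nf

lemma sub_le_of_mul_one_sub_le_sq_mul {p q r : ℝ} (hp : p ∈ Set.Icc 0 1) (hq : q ∈ Set.Icc 0 1)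
    (hr : 1 ≤ r) (h : p * (1 - q) ≤ r ^ 2 * (q * (1 - p))) :
    p - q ≤ (r - 1) / (r + 1) := by
  obtain ⟨hp₀, hp₁⟩ := hp
  obtain ⟨hq₀, hq₁⟩ := hq
  set u := √(p * (1 - q))
  set v := √(q * (1 - p))
  have hu : u ^ 2 = p * (1 - q) := Real.sq_sqrt (mul_nonneg hp₀ (sub_nonneg.2 hq₁))
  have hv : v ^ 2 = q * (1 - p) := Real.sq_sqrt (mul_nonneg hq₀ (sub_nonneg.2 hp₁))
  have hv₀ : 0 ≤ v := Real.sqrt_nonneg _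
  have huv₀ : 0 ≤ u + v := add_nonneg (Real.sqrt_nonneg _) hv₀
  have huv : u ≤ r * v :=
    Real.sqrt_le_iff.2 ⟨mul_nonneg (zero_le_one.trans hr) hv₀, by rwa [mul_pow, hv]⟩
  have huv₁ : u + v ≤ 1 := by
    have h_amgm_u : u ≤ (p + (1 - q)) / 2 :=
      Real.sqrt_le_iff.2 ⟨by linarith, by linarith [four_mul_le_sq_add p (1 - q)]⟩
    have h_amgm_v : v ≤ (q + (1 - p)) / 2 :=
      Real.sqrt_le_iff.2 ⟨by linarith, by linarith [four_mul_le_sq_add q (1 - p)]⟩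
    linarith
  rw [le_div_iff₀ (by linarith)]
  calc (p - q) * (r + 1) = (r + 1) * (u - v) * (u + v) := by linear_combination (r + 1) * (hv - hu)
    _ ≤ (r - 1) * (u + v) * (u + v) := mul_le_mul_of_nonneg_right (by linarith) huv₀
    _ = (r - 1) * (u + v) ^ 2 := by ring
    _ ≤ r - 1 := mul_le_of_le_one_right (sub_nonneg.2 hr) (pow_le_one₀ huv₀ huv₁)

lemma sum_abs_sub_eq_two_mul_sum_filter_lt {ι : Type*} {s : Finset ι} {f g : ι → ℝ}
    (h : ∑ i ∈ s, f i = ∑ i ∈ s, g i) :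
    ∑ i ∈ s, |f i - g i| = 2 * ∑ i ∈ s with g i < f i, (f i - g i) := by
  have h_abs (i : ι) : |f i - g i| = 2 * (if g i < f i then f i - g i else 0) - (f i - g i) := by
    split_ifs with hi
    · rw [abs_of_pos (sub_pos.2 hi)]; ring
    · rw [abs_of_nonpos (sub_nonpos.2 (not_lt.1 hi))]; ring
  rw [Finset.sum_congr rfl fun i _ ↦ h_abs i, Finset.sum_sub_distrib, Finset.sum_sub_distrib f g,
    h, sub_self, sub_zero, ← Finset.mul_sum, ← Finset.sum_filter]

section

variable {ι : Type*} [Fintype ι]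

lemma sum_mem_Icc_of_mem_stdSimplex {p : ι → ℝ} (hp : p ∈ stdSimplex ℝ ι) (s : Finset ι) :
    ∑ i ∈ s, p i ∈ Set.Icc 0 1 :=
  ⟨Finset.sum_nonneg fun i _ ↦ hp.1 i, hp.2 ▸ Finset.sum_le_univ_sum_of_nonneg hp.1⟩

lemma sum_abs_sub_le_of_mul_le_sq_mul {p q : ι → ℝ} {r : ℝ} (hp : p ∈ stdSimplex ℝ ι)
    (hq : q ∈ stdSimplex ℝ ι) (hr : 1 ≤ r) (h : ∀ i j, p i * q j ≤ r ^ 2 * (q i * p j)) :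
    ∑ i, |p i - q i| ≤ 2 * ((r - 1) / (r + 1)) := by
  classical
  rw [sum_abs_sub_eq_two_mul_sum_filter_lt (hp.2.trans hq.2.symm), Finset.sum_sub_distrib]
  set s : Finset ι := {i | q i < p i}
  have h_compl {w : ι → ℝ} (hw : w ∈ stdSimplex ℝ ι) : 1 - ∑ i ∈ s, w i = ∑ i ∈ sᶜ, w i := by
    rw [← hw.2, ← Finset.sum_add_sum_compl s w, add_sub_cancel_left]
  have h_odds : (∑ i ∈ s, p i) * (1 - ∑ i ∈ s, q i) ≤
      r ^ 2 * ((∑ i ∈ s, q i) * (1 - ∑ i ∈ s, p i)) := by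
    rw [h_compl hp, h_compl hq, Finset.sum_mul_sum, Finset.sum_mul_sum]
    simp only [Finset.mul_sum]
    exact Finset.sum_le_sum fun i _ ↦ Finset.sum_le_sum fun j _ ↦ h i j
  gcongr
  exact sub_le_of_mul_one_sub_le_sq_mul (sum_mem_Icc_of_mem_stdSimplex hp s)
    (sum_mem_Icc_of_mem_stdSimplex hq s) hr h_odds

/-- The softmax map at temperature `1`; temperature `α` corresponds to the argument `q / α`. -/
noncomputable def softmax (x : ι → ℝ) (i : ι) : ℝ :=
  Real.exp (x i) / ∑ j, Real.exp (x j)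

lemma softmax_mem_stdSimplex [Nonempty ι] (x : ι → ℝ) : softmax x ∈ stdSimplex ℝ ι := by
  have hZ : 0 < ∑ j, Real.exp (x j) :=
    Finset.sum_pos (fun j _ ↦ Real.exp_pos (x j)) Finset.univ_nonempty
  refine ⟨fun i ↦ by unfold softmax; positivity, ?_⟩
  simp only [softmax, ← Finset.sum_div, div_self hZ.ne']

lemma softmax_mul_softmax (x y : ι → ℝ) (i j : ι) :
    softmax x i * softmax y j =
      Real.exp (x i - y i - (x j - y j)) * (softmax y i * softmax x j) := by
  have h_exp : Real.exp (x i) * Real.exp (y j) =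
      Real.exp (x i - y i - (x j - y j)) * (Real.exp (y i) * Real.exp (x j)) := by
    simp only [← Real.exp_add]
    ring_nf
  rw [softmax, softmax, softmax, softmax, div_mul_div_comm, div_mul_div_comm, h_exp, mul_div_assoc,
    mul_comm (∑ k, Real.exp (x k))]

lemma sum_abs_softmax_sub_softmax_le [Nonempty ι] {x y : ι → ℝ} {D : ℝ}
    (h : ∀ i j, x i - y i - (x j - y j) ≤ 2 * D) :
    ∑ i, |softmax x i - softmax y i| ≤ D := by
  have hD : 0 ≤ D := by linarith [h (Classical.arbitrary ι) (Classical.arbitrary ι)]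
  have hr : 1 ≤ Real.exp D := Real.one_le_exp hD
  have h_odds (i j : ι) :
      softmax x i * softmax y j ≤ Real.exp D ^ 2 * (softmax y i * softmax x j) := by
    rw [softmax_mul_softmax, ← Real.exp_nat_mul]
    gcongr
    · exact mul_nonneg ((softmax_mem_stdSimplex y).1 i) ((softmax_mem_stdSimplex x).1 j)
    · exact_mod_cast h i j
  calc ∑ i, |softmax x i - softmax y i|
      ≤ 2 * ((Real.exp D - 1) / (Real.exp D + 1)) :=
        sum_abs_sub_le_of_mul_le_sq_mul (softmax_mem_stdSimplex x) (softmax_mem_stdSimplex y) hr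
          h_odds
    _ ≤ Real.log (Real.exp D) := two_mul_sub_one_div_add_one_le_log hr
    _ = D := Real.log_exp D

end

/-- The softmax map `σ_α(q)(a) = exp(q(a)/α) / ∑_b exp(q(b)/α)` is
`(1/α)`-Lipschitz from the sup norm to the ℓ¹ norm:
`‖σ_α(q₁) - σ_α(q₂)‖₁ ≤ (1/α) ‖q₁ - q₂‖_∞`. -/
theorem stmt15 {A : Type*} [Fintype A] [Nonempty A]
    (α : ℝ) (hα : 0 < α)
    (σ : (A → ℝ) → A → ℝ)
    (hσ : ∀ (q : A → ℝ) (a : A),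
      σ q a = Real.exp (q a / α) / ∑ b, Real.exp (q b / α)) :
    ∀ q₁ q₂ : A → ℝ,
      ∑ a, |σ q₁ a - σ q₂ a| ≤ (1 / α) * ⨆ a : A, |q₁ a - q₂ a| := by
  intro q₁ q₂
  have hσ_eq (q : A → ℝ) : σ q = softmax fun a ↦ q a / α := funext (hσ q)
  have h_sup (a : A) : |q₁ a - q₂ a| ≤ ⨆ b, |q₁ b - q₂ b| :=
    le_ciSup (f := fun b ↦ |q₁ b - q₂ b|) (Set.finite_range _).bddAbove a
  rw [hσ_eq, hσ_eq]
  refine sum_abs_softmax_sub_softmax_le fun a b ↦ ?_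
  calc q₁ a / α - q₂ a / α - (q₁ b / α - q₂ b / α)
      = 1 / α * (q₁ a - q₂ a - (q₁ b - q₂ b)) := by ring
    _ ≤ 1 / α * (2 * ⨆ c, |q₁ c - q₂ c|) := by
        gcongr
        linarith [(abs_le.1 (h_sup a)).2, (abs_le.1 (h_sup b)).1]
    _ = 2 * (1 / α * ⨆ c, |q₁ c - q₂ c|) := by ring
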